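/- Let n, d₁, d₂ ≥ 1, M₁ ∈ ℝ, M₂ ≤ 0, and let a : ℝⁿ × ℝ^{d₁} × ℝ^{d₂} → ℂ be smooth and satisfy, for all multi-indices α, β, γ, |∂_x^γ ∂_{ξ′}^α ∂_{ξ″}^β a(x,ξ′,ξ″)| ≤ C_{α,β,γ} ⟨(ξ′,ξ″)⟩^{M₁−|α|} ⟨ξ″⟩^{M₂−|β|} for all arguments, where ⟨·⟩ := (1+|·|²)^{1/2}. Then for every multi-index α in the joint variable ξ = (ξ′,ξ″) and every γ there is C′ such that on the region {⟨ξ″⟩² ≥ ⟨(ξ′,ξ″)⟩}: |∂_x^γ ∂_ξ^α a(x,ξ)| ≤ C′ ⟨ξ⟩^{M₁ + M₂/2 − |α|/2}; that is, a satisfies a symbol estimate of type (1/2,1/2) and order M₁ + M₂/2 there. -/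

import Mathlib

/-- The Japanese bracket `⟨v⟩ = (1 + |v|²)^{1/2}`. -/
noncomputable def jap {d : ℕ} (v : EuclideanSpace ℝ (Fin d)) : ℝ :=
  Real.sqrt (1 + ‖v‖ ^ 2)

/-- The Japanese bracket of a pair. -/
noncomputable def jap2 {d e : ℕ} (u : EuclideanSpace ℝ (Fin d))
    (v : EuclideanSpace ℝ (Fin e)) : ℝ :=
  Real.sqrt (1 + ‖u‖ ^ 2 + ‖v‖ ^ 2)

/-!
Writing each joint direction as `(v′, 0) + (0, v″)`, multilinearity and symmetry turn an `N`-th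
derivative in `ξ = (ξ′, ξ″)` into a sum of `2 ^ N` mixed derivatives with `α` directions in `ξ′`
and `β` in `ξ″`, `α + β = N`. On the parabolic region `⟨ξ⟩^{1/2} ≤ ⟨ξ″⟩`; since `M₂ - β ≤ 0`, the
factor `⟨ξ″⟩^{M₂ - β}` is at most `⟨ξ⟩^{(M₂ - β)/2}`, while `⟨ξ⟩^{-α} ≤ ⟨ξ⟩^{-α/2}`.
-/

open scoped ContDiff

section IteratedDirDeriv

variable (𝕜 : Type*) [RCLike 𝕜]
  {E : Type*} [NormedAddCommGroup E] [NormedSpace 𝕜 E]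
  {F : Type*} [NormedAddCommGroup F] [NormedSpace 𝕜 F]
  {G : Type*} [NormedAddCommGroup G] [NormedSpace 𝕜 G]

/-- The iterated directional derivative `∂_{v₁} ⋯ ∂_{vₖ} f` along a list of vectors, the head
of the list being the outermost derivative. Lists rather than families indexed by `Fin k` make
reordering the derivatives a statement about `List.Perm`. -/
noncomputable def iteratedDirDeriv : List E → (E → F) → E → F
  | [], f => f
  | v :: l, f => fun x => fderiv 𝕜 (iteratedDirDeriv l f) x v

variable {𝕜} {f : E → F}

theorem contDiff_iteratedDirDeriv (hf : ContDiff 𝕜 ∞ f) (l : List E) :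
    ContDiff 𝕜 ∞ (iteratedDirDeriv 𝕜 l f) := by
  induction l with
  | nil => exact hf
  | cons v l ih => exact (ih.fderiv_right (by simp)).clm_apply contDiff_const

theorem iteratedDirDeriv_append (l₁ l₂ : List E) (f : E → F) :
    iteratedDirDeriv 𝕜 (l₁ ++ l₂) f = iteratedDirDeriv 𝕜 l₁ (iteratedDirDeriv 𝕜 l₂ f) := by
  induction l₁ with
  | nil => rfl
  | cons v l₁ ih => simp only [List.cons_append, iteratedDirDeriv, ih]

theorem iteratedDirDeriv_clm_comp (L : F →L[𝕜] G) (hf : ContDiff 𝕜 ∞ f) (l : List E) :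
    iteratedDirDeriv 𝕜 l (fun x => L (f x)) = fun x => L (iteratedDirDeriv 𝕜 l f x) := by
  induction l with
  | nil => rfl
  | cons v l ih =>
    funext x
    have hdiff := (contDiff_iteratedDirDeriv hf l).differentiable (by simp) x
    simp only [iteratedDirDeriv, ih]
    exact congrArg (· v) (L.hasFDerivAt.comp x hdiff.hasFDerivAt).fderiv

theorem iteratedDirDeriv_cons_cons (hf : ContDiff 𝕜 ∞ f) (v w : E) (l : List E) (x : E) :
    iteratedDirDeriv 𝕜 (v :: w :: l) f x =
      fderiv 𝕜 (fderiv 𝕜 (iteratedDirDeriv 𝕜 l f)) x v w := by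
  have hdiff : DifferentiableAt 𝕜 (fderiv 𝕜 (iteratedDirDeriv 𝕜 l f)) x :=
    ((contDiff_iteratedDirDeriv hf l).fderiv_right (m := ∞) (by simp)).differentiable (by simp) x
  simp [iteratedDirDeriv, fderiv_clm_apply hdiff (differentiableAt_const w)]

theorem iteratedDirDeriv_perm {l₁ l₂ : List E} (h : l₁.Perm l₂) (hf : ContDiff 𝕜 ∞ f) :
    iteratedDirDeriv 𝕜 l₁ f = iteratedDirDeriv 𝕜 l₂ f := by
  induction h with
  | nil => rfl
  | cons v _ ih => simp only [iteratedDirDeriv, ih]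
  | swap v w l =>
    funext x
    have hsymm : IsSymmSndFDerivAt 𝕜 (iteratedDirDeriv 𝕜 l f) x :=
      (contDiff_iteratedDirDeriv hf l).contDiffAt.isSymmSndFDerivAt
        (by simpa using WithTop.coe_le_coe.2 (le_top : (2 : ℕ∞) ≤ ⊤))
    simp only [iteratedDirDeriv_cons_cons hf, hsymm.eq]
  | trans _ _ ih₁ ih₂ => exact ih₁.trans ih₂

theorem iteratedDirDeriv_iteratedDirDeriv_of_perm {l₁ l₂ l : List E} (h : (l₁ ++ l₂).Perm l)
    (hf : ContDiff 𝕜 ∞ f) :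
    iteratedDirDeriv 𝕜 l₁ (iteratedDirDeriv 𝕜 l₂ f) = iteratedDirDeriv 𝕜 l f := by
  rw [← iteratedDirDeriv_append, iteratedDirDeriv_perm h hf]

theorem iteratedFDeriv_apply_eq_iteratedDirDeriv (hf : ContDiff 𝕜 ∞ f) {k : ℕ} (x : E)
    (m : Fin k → E) :
    iteratedFDeriv 𝕜 k f x m = iteratedDirDeriv 𝕜 (List.ofFn m) f x := by
  induction k generalizing x with
  | zero => simp [iteratedDirDeriv]
  | succ k ih =>
    have hdiff := hf.differentiable_iteratedFDeriv (by exact_mod_cast WithTop.coe_lt_top k) x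
    rw [hdiff.iteratedFDeriv_succ_apply_left', List.ofFn_succ]
    simp only [ih, iteratedDirDeriv]
    rfl

end IteratedDirDeriv

section IteratedFDerivAlong

variable (𝕜 : Type*) [RCLike 𝕜]
  {E : Type*} [NormedAddCommGroup E] [NormedSpace 𝕜 E]
  {E₁ : Type*} [NormedAddCommGroup E₁] [NormedSpace 𝕜 E₁]
  {F : Type*} [NormedAddCommGroup F] [NormedSpace 𝕜 F]

/-- The `k`-th derivative of `f` in the directions of the range of `ι`. For the inclusion `ι` of
a factor of a product this is the `k`-th partial derivative, still as a function on the whole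
product, so that partial derivatives in different variables can be composed. -/
noncomputable def iteratedFDerivAlong (ι : E₁ →L[𝕜] E) (k : ℕ) (f : E → F) (x : E) :
    ContinuousMultilinearMap 𝕜 (fun _ : Fin k => E₁) F :=
  (iteratedFDeriv 𝕜 k f x).compContinuousLinearMap fun _ => ι

variable {𝕜} {f : E → F}

theorem contDiff_iteratedFDerivAlong (hf : ContDiff 𝕜 ∞ f) (ι : E₁ →L[𝕜] E) (k : ℕ) :
    ContDiff 𝕜 ∞ (iteratedFDerivAlong 𝕜 ι k f) :=
  (ContinuousMultilinearMap.compContinuousLinearMapL fun _ => ι).contDiff.comp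
    (hf.iteratedFDeriv_right (by exact_mod_cast le_top))

theorem iteratedFDeriv_comp_affine (hf : ContDiff 𝕜 ∞ f) {ι : E₁ →L[𝕜] E} {φ : E₁ → E}
    (hφ : ∀ y, φ y = φ 0 + ι y) (k : ℕ) (y : E₁) :
    iteratedFDeriv 𝕜 k (fun y => f (φ y)) y = iteratedFDerivAlong 𝕜 ι k f (φ y) := by
  have hcomp : (fun y => f (φ y)) = (fun x => f (φ 0 + x)) ∘ ι :=
    funext fun y => congrArg f (hφ y)
  have hf' : ContDiff 𝕜 ∞ fun x => f (φ 0 + x) := hf.comp (contDiff_const.add contDiff_id)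
  rw [hcomp, ι.iteratedFDeriv_comp_right hf' y (by exact_mod_cast le_top),
    iteratedFDeriv_comp_add_left, ← hφ]
  rfl

theorem iteratedDirDeriv_iteratedFDerivAlong_apply (hf : ContDiff 𝕜 ∞ f) (ι : E₁ →L[𝕜] E) {k : ℕ}
    (l : List E) (x : E) (m : Fin k → E₁) :
    iteratedDirDeriv 𝕜 l (iteratedFDerivAlong 𝕜 ι k f) x m =
      iteratedDirDeriv 𝕜 (l ++ (List.ofFn m).map ι) f x := by
  have hm : (fun x => iteratedFDerivAlong 𝕜 ι k f x m) =
      iteratedDirDeriv 𝕜 ((List.ofFn m).map ι) f := by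
    funext x
    rw [List.map_ofFn, ← iteratedFDeriv_apply_eq_iteratedDirDeriv hf]
    rfl
  rw [iteratedDirDeriv_append, ← hm]
  exact (congrFun (iteratedDirDeriv_clm_comp (ContinuousMultilinearMap.apply 𝕜 _ F m)
    (contDiff_iteratedFDerivAlong hf ι k) l) x).symm

theorem norm_iteratedDirDeriv_iteratedFDerivAlong_le_iff (hf : ContDiff 𝕜 ∞ f) (ι : E₁ →L[𝕜] E)
    {k : ℕ} (l : List E) (x : E) {K : ℝ} (hK : 0 ≤ K) :
    ‖iteratedDirDeriv 𝕜 l (iteratedFDerivAlong 𝕜 ι k f) x‖ ≤ K ↔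
      ∀ l₁ : List E₁, l₁.length = k →
        ‖iteratedDirDeriv 𝕜 (l ++ l₁.map ι) f x‖ ≤ K * (l₁.map norm).prod := by
  simp only [ContinuousMultilinearMap.opNorm_le_iff hK,
    iteratedDirDeriv_iteratedFDerivAlong_apply hf]
  have hprod (m : Fin k → E₁) : ((List.ofFn m).map norm).prod = ∏ i, ‖m i‖ := by
    simp [List.map_ofFn, List.prod_ofFn]
  constructor
  · rintro h l₁ rfl
    simpa only [← hprod, List.ofFn_get] using h l₁.get
  · intro h m
    simpa only [hprod] using h (List.ofFn m) List.length_ofFn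

end IteratedFDerivAlong

section JointDerivative

variable {𝕜 : Type*} [RCLike 𝕜]
  {E : Type*} [NormedAddCommGroup E] [NormedSpace 𝕜 E]
  {X : Type*} [NormedAddCommGroup X] [NormedSpace 𝕜 X]
  {Y : Type*} [NormedAddCommGroup Y] [NormedSpace 𝕜 Y]
  {Z : Type*} [NormedAddCommGroup Z] [NormedSpace 𝕜 Z]
  {F : Type*} [NormedAddCommGroup F] [NormedSpace 𝕜 F]

open ContinuousLinearMap (inl inr)

theorem prod_map_norm_nonneg {A : Type*} [SeminormedAddGroup A] (l : List A) :
    0 ≤ (l.map norm).prod :=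
  List.prod_nonneg (by simp)

theorem norm_iteratedDirDeriv_le_of_norm_iteratedFDerivAlong_le {f : E → F}
    (hf : ContDiff 𝕜 ∞ f) (i₁ : X →L[𝕜] E) (i₂ : Y →L[𝕜] E) (i₃ : Z →L[𝕜] E) (p : E)
    (us : List X) (ys : List Y) (zs : List Z) {K : ℝ}
    (hK : ‖iteratedFDerivAlong 𝕜 i₁ us.length (iteratedFDerivAlong 𝕜 i₂ ys.length
      (iteratedFDerivAlong 𝕜 i₃ zs.length f)) p‖ ≤ K) :
    ‖iteratedDirDeriv 𝕜 (us.map i₁ ++ ys.map i₂ ++ zs.map i₃) f p‖ ≤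
      K * (us.map norm).prod * (ys.map norm).prod * (zs.map norm).prod := by
  have hK₁ : 0 ≤ K := (norm_nonneg _).trans hK
  have hK₂ := mul_nonneg hK₁ (prod_map_norm_nonneg us)
  have hK₃ := mul_nonneg hK₂ (prod_map_norm_nonneg ys)
  have hf₃ := contDiff_iteratedFDerivAlong hf i₃ zs.length
  have hf₂ := contDiff_iteratedFDerivAlong hf₃ i₂ ys.length
  have h₁ := (norm_iteratedDirDeriv_iteratedFDerivAlong_le_iff hf₂ i₁ [] p hK₁).1 hK us rfl
  have h₂ := (norm_iteratedDirDeriv_iteratedFDerivAlong_le_iff hf₃ i₂ _ p hK₂).1 h₁ ys rfl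
  exact (norm_iteratedDirDeriv_iteratedFDerivAlong_le_iff hf i₃ _ p hK₃).1 h₂ zs rfl

theorem norm_iteratedDirDeriv_map_prod_le {f : E → F} (hf : ContDiff 𝕜 ∞ f)
    (j : Y × Z →L[𝕜] E) (p : E) (l : List (Y × Z)) {K : ℝ} (hK₀ : 0 ≤ K)
    (hK : ∀ (ys : List Y) (zs : List Z), ys.length + zs.length = l.length →
      ‖iteratedDirDeriv 𝕜 (ys.map (j ∘L inl 𝕜 Y Z) ++ zs.map (j ∘L inr 𝕜 Y Z)) f p‖ ≤
        K * (ys.map norm).prod * (zs.map norm).prod) :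
    ‖iteratedDirDeriv 𝕜 (l.map j) f p‖ ≤ 2 ^ l.length * K * (l.map norm).prod := by
  induction l generalizing f K with
  | nil => simpa using hK [] [] rfl
  | cons v l ih =>
    have hfst := ih (K := K * ‖v.1‖) (contDiff_iteratedDirDeriv hf [j (v.1, 0)]) (by positivity)
      fun ys zs hlen => by
        rw [iteratedDirDeriv_iteratedDirDeriv_of_perm (List.perm_append_singleton _ _) hf]
        simpa [mul_assoc] using hK (v.1 :: ys) zs (by grind)
    have hsnd := ih (K := K * ‖v.2‖) (contDiff_iteratedDirDeriv hf [j (0, v.2)]) (by positivity)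
      fun ys zs hlen => by
        rw [iteratedDirDeriv_iteratedDirDeriv_of_perm
          ((List.perm_append_singleton _ _).trans List.perm_middle.symm) hf]
        simpa [mul_assoc, mul_left_comm] using hK ys (v.2 :: zs) (by grind)
    rw [iteratedDirDeriv_iteratedDirDeriv_of_perm (List.perm_append_singleton _ _) hf]
      at hfst hsnd
    have hsplit : iteratedDirDeriv 𝕜 ((v :: l).map j) f p =
        iteratedDirDeriv 𝕜 (j (v.1, 0) :: l.map j) f p +
          iteratedDirDeriv 𝕜 (j (0, v.2) :: l.map j) f p := by
      simp [iteratedDirDeriv, ← map_add]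
    have hprod := prod_map_norm_nonneg l
    calc ‖iteratedDirDeriv 𝕜 ((v :: l).map j) f p‖
        ≤ 2 ^ l.length * (K * ‖v.1‖) * (l.map norm).prod +
            2 ^ l.length * (K * ‖v.2‖) * (l.map norm).prod :=
          hsplit ▸ norm_add_le_of_le hfst hsnd
      _ = 2 ^ l.length * (K * (l.map norm).prod) * (‖v.1‖ + ‖v.2‖) := by ring
      _ ≤ 2 ^ l.length * (K * (l.map norm).prod) * (‖v‖ + ‖v‖) := by
          gcongr
          exacts [norm_fst_le v, norm_snd_le v]
      _ = 2 ^ (v :: l).length * K * ((v :: l).map norm).prod := by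
          simp only [List.length_cons, List.map_cons, List.prod_cons]
          ring

theorem norm_iteratedFDerivAlong_prod_le {f : E → F} (hf : ContDiff 𝕜 ∞ f) (i : X →L[𝕜] E)
    (j : Y × Z →L[𝕜] E) (p : E) {γ N : ℕ} {K : ℝ}
    (hK : ∀ α β : ℕ, α + β = N →
      ‖iteratedFDerivAlong 𝕜 i γ (iteratedFDerivAlong 𝕜 (j ∘L inl 𝕜 Y Z) α
        (iteratedFDerivAlong 𝕜 (j ∘L inr 𝕜 Y Z) β f)) p‖ ≤ K) :
    ‖iteratedFDerivAlong 𝕜 i γ (iteratedFDerivAlong 𝕜 j N f) p‖ ≤ 2 ^ N * K := by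
  have hK₀ : 0 ≤ K := (norm_nonneg _).trans (hK N 0 rfl)
  refine (norm_iteratedDirDeriv_iteratedFDerivAlong_le_iff
    (contDiff_iteratedFDerivAlong hf j N) i [] p (by positivity)).2 fun us hus =>
      (norm_iteratedDirDeriv_iteratedFDerivAlong_le_iff hf j _ p
        (mul_nonneg (by positivity) (prod_map_norm_nonneg us))).2 fun vs hvs => ?_
  have hjoint := norm_iteratedDirDeriv_map_prod_le
    (contDiff_iteratedDirDeriv hf (us.map i)) j p vs
    (mul_nonneg hK₀ (prod_map_norm_nonneg us)) fun ys zs hlen => by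
      rw [iteratedDirDeriv_iteratedDirDeriv_of_perm List.perm_append_comm hf, ← List.append_assoc]
      exact norm_iteratedDirDeriv_le_of_norm_iteratedFDerivAlong_le hf i _ _ p us ys zs
        (hus ▸ hK _ _ (hlen.trans hvs))
  rw [iteratedDirDeriv_iteratedDirDeriv_of_perm List.perm_append_comm hf, hvs] at hjoint
  simpa only [mul_assoc, List.nil_append] using hjoint

theorem iteratedFDeriv_iteratedFDeriv_eq_along {a : X → Y → F}
    (ha : ContDiff 𝕜 ∞ fun p : X × Y => a p.1 p.2) (k l : ℕ) (x : X) (y : Y) :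
    iteratedFDeriv 𝕜 k (fun x => iteratedFDeriv 𝕜 l (fun y => a x y) y) x =
      iteratedFDerivAlong 𝕜 (inl 𝕜 X Y) k
        (iteratedFDerivAlong 𝕜 (inr 𝕜 X Y) l fun p => a p.1 p.2) (x, y) := by
  have hinner (x : X) := iteratedFDeriv_comp_affine ha (φ := fun y => (x, y))
    (ι := inr 𝕜 X Y) (by simp) l y
  have houter := iteratedFDeriv_comp_affine (contDiff_iteratedFDerivAlong ha (inr 𝕜 X Y) l)
    (φ := fun x => (x, y)) (ι := inl 𝕜 X Y) (by simp) k x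
  simp only [hinner, houter]

theorem iteratedFDeriv_iteratedFDeriv_iteratedFDeriv_eq_along {a : X → Y → Z → F}
    (ha : ContDiff 𝕜 ∞ fun p : X × Y × Z => a p.1 p.2.1 p.2.2) (γ α β : ℕ)
    (x : X) (y : Y) (z : Z) :
    iteratedFDeriv 𝕜 γ (fun x => iteratedFDeriv 𝕜 α (fun y =>
        iteratedFDeriv 𝕜 β (fun z => a x y z) z) y) x =
      iteratedFDerivAlong 𝕜 (inl 𝕜 X (Y × Z)) γ
        (iteratedFDerivAlong 𝕜 (inr 𝕜 X (Y × Z) ∘L inl 𝕜 Y Z) α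
          (iteratedFDerivAlong 𝕜 (inr 𝕜 X (Y × Z) ∘L inr 𝕜 Y Z) β
            fun p => a p.1 p.2.1 p.2.2)) (x, y, z) := by
  have hinner (x : X) (y : Y) := iteratedFDeriv_comp_affine ha (φ := fun z => (x, y, z))
    (ι := inr 𝕜 X (Y × Z) ∘L inr 𝕜 Y Z) (by simp) β z
  have hmiddle (x : X) := iteratedFDeriv_comp_affine
    (contDiff_iteratedFDerivAlong ha (inr 𝕜 X (Y × Z) ∘L inr 𝕜 Y Z) β)
    (φ := fun y => (x, y, z)) (ι := inr 𝕜 X (Y × Z) ∘L inl 𝕜 Y Z) (by simp) α y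
  simp only [hinner, hmiddle]
  exact iteratedFDeriv_comp_affine (contDiff_iteratedFDerivAlong
    (contDiff_iteratedFDerivAlong ha _ _) _ _) (φ := fun x => (x, y, z)) (by simp) γ x

theorem norm_iteratedFDeriv_joint_le {a : X → Y → Z → F}
    (ha : ContDiff 𝕜 ∞ fun p : X × Y × Z => a p.1 p.2.1 p.2.2) {γ N : ℕ} {K : ℝ}
    (x : X) (ξ : Y × Z)
    (hK : ∀ α β : ℕ, α + β = N →
      ‖iteratedFDeriv 𝕜 γ (fun x => iteratedFDeriv 𝕜 α (fun y =>
        iteratedFDeriv 𝕜 β (fun z => a x y z) ξ.2) ξ.1) x‖ ≤ K) :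
    ‖iteratedFDeriv 𝕜 γ (fun x => iteratedFDeriv 𝕜 N (fun ξ : Y × Z => a x ξ.1 ξ.2) ξ) x‖ ≤
      2 ^ N * K := by
  simp only [iteratedFDeriv_iteratedFDeriv_iteratedFDeriv_eq_along ha] at hK
  rw [iteratedFDeriv_iteratedFDeriv_eq_along (a := fun x (ξ : Y × Z) => a x ξ.1 ξ.2) ha]
  exact norm_iteratedFDerivAlong_prod_le ha _ _ _ hK

end JointDerivative

section ParabolicRegion

theorem jap_nonneg {d : ℕ} (v : EuclideanSpace ℝ (Fin d)) : 0 ≤ jap v :=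
  Real.sqrt_nonneg _

theorem one_le_jap2 {d e : ℕ} (u : EuclideanSpace ℝ (Fin d)) (v : EuclideanSpace ℝ (Fin e)) :
    1 ≤ jap2 u v :=
  Real.one_le_sqrt.2 (by linarith [sq_nonneg ‖u‖, sq_nonneg ‖v‖])

theorem rpow_mul_rpow_le_of_le_sq {r s : ℝ} (hr : 1 ≤ r) (hs : 0 ≤ s) (hrs : r ≤ s ^ 2)
    (M₁ : ℝ) {M₂ α β : ℝ} (hM₂ : M₂ ≤ 0) (hα : 0 ≤ α) (hβ : 0 ≤ β) :
    r ^ (M₁ - α) * s ^ (M₂ - β) ≤ r ^ (M₁ + M₂ / 2 - (α + β) / 2) := by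
  have hr₀ : 0 < r := zero_lt_one.trans_le hr
  have hsqrt : r ^ (1 / 2 : ℝ) ≤ s := by
    rw [← Real.sqrt_eq_rpow]
    exact Real.sqrt_le_iff.2 ⟨hs, hrs⟩
  calc r ^ (M₁ - α) * s ^ (M₂ - β)
      ≤ r ^ (M₁ - α) * (r ^ (1 / 2 : ℝ)) ^ (M₂ - β) := by
        gcongr ?_ * ?_
        exact Real.rpow_le_rpow_of_nonpos (by positivity) hsqrt (by linarith)
    _ = r ^ (M₁ - α + 1 / 2 * (M₂ - β)) := by rw [← Real.rpow_mul hr₀.le, ← Real.rpow_add hr₀]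
    _ ≤ r ^ (M₁ + M₂ / 2 - (α + β) / 2) := Real.rpow_le_rpow_of_exponent_le hr (by linarith)

variable {X : Type*} [NormedAddCommGroup X] [NormedSpace ℝ X]
  {Y : Type*} [NormedAddCommGroup Y] [NormedSpace ℝ Y]
  {Z : Type*} [NormedAddCommGroup Z] [NormedSpace ℝ Z]
  {F : Type*} [NormedAddCommGroup F] [NormedSpace ℝ F]

theorem stmt13_general {M₁ M₂ : ℝ} (hM₂ : M₂ ≤ 0) {ρ σ : X → Y → Z → ℝ}
    (hρ : ∀ x y z, 1 ≤ ρ x y z) (hσ : ∀ x y z, 0 ≤ σ x y z) {a : X → Y → Z → F}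
    (ha_smooth : ContDiff ℝ ∞ fun p : X × Y × Z => a p.1 p.2.1 p.2.2)
    (γ : ℕ) (ha : ∀ α β : ℕ, ∃ C : ℝ, ∀ x y z,
      ‖iteratedFDeriv ℝ γ (fun x => iteratedFDeriv ℝ α (fun y =>
          iteratedFDeriv ℝ β (fun z => a x y z) z) y) x‖ ≤
        C * ρ x y z ^ (M₁ - (α : ℝ)) * σ x y z ^ (M₂ - (β : ℝ)))
    (N : ℕ) :
    ∃ C' : ℝ, ∀ (x : X) (ξ : Y × Z), ρ x ξ.1 ξ.2 ≤ σ x ξ.1 ξ.2 ^ 2 →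
      ‖iteratedFDeriv ℝ γ (fun x => iteratedFDeriv ℝ N (fun ξ : Y × Z => a x ξ.1 ξ.2) ξ) x‖ ≤
        C' * ρ x ξ.1 ξ.2 ^ (M₁ + M₂ / 2 - (N : ℝ) / 2) := by
  choose C hC using ha
  let A := ∑ k ∈ Finset.HasAntidiagonal.antidiagonal N, |C k.1 k.2|
  refine ⟨2 ^ N * A, fun x ξ hξ => ?_⟩
  rw [mul_assoc]
  refine norm_iteratedFDeriv_joint_le ha_smooth x ξ fun α β hαβ => ?_
  have hmem : (α, β) ∈ Finset.HasAntidiagonal.antidiagonal N :=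
    Finset.HasAntidiagonal.mem_antidiagonal.2 hαβ
  have hCA : C α β ≤ A := (le_abs_self _).trans <|
    Finset.single_le_sum (f := fun k : ℕ × ℕ => |C k.1 k.2|) (fun _ _ => abs_nonneg _) hmem
  have hweight := rpow_mul_rpow_le_of_le_sq (hρ x ξ.1 ξ.2) (hσ x ξ.1 ξ.2) hξ M₁ hM₂
    (α.cast_nonneg) (β.cast_nonneg)
  have hρ₀ := zero_le_one.trans (hρ x ξ.1 ξ.2)
  have hσ₀ := hσ x ξ.1 ξ.2
  rw [← hαβ, Nat.cast_add]
  refine (hC α β x ξ.1 ξ.2).trans ?_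
  rw [mul_assoc]
  gcongr

end ParabolicRegion

/-- On the parabolic region `⟨ξ″⟩² ≥ ⟨(ξ′,ξ″)⟩`, a symbol-valued symbol of order
`(M₁,M₂)` with `M₂ ≤ 0` satisfies a type-`(1/2,1/2)` symbol estimate of order
`M₁ + M₂/2` in the joint variable. -/
theorem stmt13 (n d₁ d₂ : ℕ) (hn : 1 ≤ n) (hd₁ : 1 ≤ d₁) (hd₂ : 1 ≤ d₂)
    (M₁ M₂ : ℝ) (hM₂ : M₂ ≤ 0)
    (a : EuclideanSpace ℝ (Fin n) → EuclideanSpace ℝ (Fin d₁) →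
      EuclideanSpace ℝ (Fin d₂) → ℂ)
    (ha_smooth : ContDiff ℝ (⊤ : ℕ∞)
      (fun p : EuclideanSpace ℝ (Fin n) × EuclideanSpace ℝ (Fin d₁) ×
          EuclideanSpace ℝ (Fin d₂) => a p.1 p.2.1 p.2.2))
    (ha : ∀ γ α β : ℕ, ∃ C : ℝ, ∀ x ξ' ξ'',
      ‖iteratedFDeriv ℝ γ (fun x => iteratedFDeriv ℝ α (fun ξ' =>
          iteratedFDeriv ℝ β (fun ξ'' => a x ξ' ξ'') ξ'') ξ') x‖ ≤
        C * jap2 ξ' ξ'' ^ (M₁ - (α : ℝ)) * jap ξ'' ^ (M₂ - (β : ℝ))) :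
    ∀ γ α : ℕ, ∃ C' : ℝ,
      ∀ (x : EuclideanSpace ℝ (Fin n))
        (ξ : EuclideanSpace ℝ (Fin d₁) × EuclideanSpace ℝ (Fin d₂)),
        jap2 ξ.1 ξ.2 ≤ jap ξ.2 ^ 2 →
      ‖iteratedFDeriv ℝ γ (fun x => iteratedFDeriv ℝ α
          (fun ξ : EuclideanSpace ℝ (Fin d₁) × EuclideanSpace ℝ (Fin d₂) =>
            a x ξ.1 ξ.2) ξ) x‖ ≤
        C' * jap2 ξ.1 ξ.2 ^ (M₁ + M₂ / 2 - (α : ℝ) / 2) :=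
  fun γ => stmt13_general hM₂ (ρ := fun _ => jap2) (σ := fun _ _ => jap) (fun _ => one_le_jap2)
    (fun _ _ => jap_nonneg) ha_smooth γ (ha γ)
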